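/- Define g : (1, +∞) → (0,1) by g(β) = max{ (β−2)/(β²−1), (β−1)²/(β³+β²−β) }. Let β and γ be real numbers with β > 1, γ < 0 and β + γ > 2 − g(β). Then there exist an open set U ⊆ ℂ containing the real interval [γ/β, 1] and a closed disk K ⊆ ℂ such that for every graph G and every external field vector λ with λ_v ∈ U for all v ∈ V(G): (1) for every non-isolated vertex v ∈ V(G) (a vertex incident to at least one edge), [Z_{G,v}(λ)]₀ ≠ 0, so R_{G,v}(λ) is well defined, and R_{G,v}(λ) ∈ K; and (2) the partition function Z_G(λ) is nonzero. -/

import Mathlib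

open scoped BigOperators

/-- A finite undirected multigraph (self-loops and parallel edges permitted),
with vertices `Fin n` and edges given as a multiset of (ordered representatives of)
unordered pairs of vertices.  Since the edge weight below is symmetric, the
orientation of each pair is immaterial. -/
structure MultiGraph where
  n : ℕ
  edges : Multiset (Fin n × Fin n)

/-- The edge interaction: `A₀₀ = β`, `A₀₁ = A₁₀ = 1`, `A₁₁ = γ`
(spin `false` = 0, spin `true` = 1). -/
noncomputable def edgeW (β γ : ℝ) (i j : Bool) : ℂ :=
  if i = j then (if i then (γ : ℂ) else (β : ℂ)) else 1

/-- The partition function with complex external fields `lam`. -/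
noncomputable def ZC (β γ : ℝ) (G : MultiGraph) (lam : Fin G.n → ℂ) : ℂ :=
  ∑ σ : Fin G.n → Bool,
    (G.edges.map fun e => edgeW β γ (σ e.1) (σ e.2)).prod *
      ∏ v, (if σ v then lam v else 1)

/-- `[Z_{G,v}(λ)]_i` : the partition function restricted to configurations with `σ v = i`. -/
noncomputable def ZCv (β γ : ℝ) (G : MultiGraph) (lam : Fin G.n → ℂ) (v : Fin G.n) (i : Bool) : ℂ :=
  ∑ σ : Fin G.n → Bool,
    if σ v = i then
      (G.edges.map fun e => edgeW β γ (σ e.1) (σ e.2)).prod *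
        ∏ u, (if σ u then lam u else 1)
    else 0

/-- The function `g(β) = max{(β−2)/(β²−1), (β−1)²/(β³+β²−β)}`. -/
noncomputable def gFun (β : ℝ) : ℝ :=
  max ((β - 2) / (β ^ 2 - 1)) ((β - 1) ^ 2 / (β ^ 3 + β ^ 2 - β))

section comb
set_option linter.unusedSectionVars false
variable {V : Type} [Fintype V] [DecidableEq V]

noncomputable def wW (β γ : ℝ) (E : Multiset (V × V)) (lam : V → ℂ) (σ : V → Bool) : ℂ :=
  (E.map fun e => edgeW β γ (σ e.1) (σ e.2)).prod * ∏ v, (if σ v then lam v else 1)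

noncomputable def z0 (β γ : ℝ) (E : Multiset (V × V)) (lam : V → ℂ) : ℂ :=
  ∑ σ : V → Bool, wW β γ E lam σ

noncomputable def z1 (β γ : ℝ) (E : Multiset (V × V)) (lam : V → ℂ) (v : V) (i : Bool) : ℂ :=
  ∑ σ : V → Bool, if σ v = i then wW β γ E lam σ else 0

noncomputable def z2 (β γ : ℝ) (E : Multiset (V × V)) (lam : V → ℂ) (u v : V) (i j : Bool) : ℂ :=
  ∑ σ : V → Bool, if σ u = i ∧ σ v = j then wW β γ E lam σ else 0

def inc (E : Multiset (V × V)) (v : V) : Prop := ∃ e ∈ E, e.1 = v ∨ e.2 = v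

lemma z0_eq (β γ : ℝ) (E : Multiset (V × V)) (lam : V → ℂ) (v : V) :
    z0 β γ E lam = z1 β γ E lam v false + z1 β γ E lam v true := by
  unfold z0 z1
  rw [← Finset.sum_add_distrib]
  refine Finset.sum_congr rfl fun σ _ => ?_
  cases σ v <;> simp

lemma wW_update_zero (β γ : ℝ) (E : Multiset (V × V)) (lam : V → ℂ) (v : V) (σ : V → Bool) :
    wW β γ E (Function.update lam v 0) σ = if σ v = false then wW β γ E lam σ else 0 := by
  unfold wW
  by_cases h : σ v = false
  · rw [if_pos h]
    congr 1
    refine Finset.prod_congr rfl fun w _ => ?_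
    by_cases hw : w = v
    · subst hw; simp [h]
    · simp [Function.update_of_ne hw]
  · rw [if_neg h]
    have : ∏ w, (if σ w then Function.update lam v 0 w else 1) = 0 := by
      apply Finset.prod_eq_zero (Finset.mem_univ v)
      simp at h
      simp [h]
    rw [this, mul_zero]

lemma z0_update (β γ : ℝ) (E : Multiset (V × V)) (lam : V → ℂ) (v : V) :
    z0 β γ E (Function.update lam v 0) = z1 β γ E lam v false := by
  unfold z0 z1
  simp only [wW_update_zero]

lemma z1_update (β γ : ℝ) (E : Multiset (V × V)) (lam : V → ℂ) (u v : V) (i : Bool) :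
    z1 β γ E (Function.update lam v 0) u i = z2 β γ E lam u v i false := by
  unfold z1 z2
  simp only [wW_update_zero, ite_and]

lemma z2_symm (β γ : ℝ) (E : Multiset (V × V)) (lam : V → ℂ) (u v : V) (i j : Bool) :
    z2 β γ E lam u v i j = z2 β γ E lam v u j i := by
  unfold z2
  simp only [and_comm]

/-- flip the spin at `u` -/
def flipE (u : V) : (V → Bool) ≃ (V → Bool) where
  toFun σ := Function.update σ u (!(σ u))
  invFun σ := Function.update σ u (!(σ u))
  left_inv σ := by simp
  right_inv σ := by simp

lemma wW_flip (β γ : ℝ) (E : Multiset (V × V)) (lam : V → ℂ) (u : V) (hu : ¬ inc E u)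
    (σ : V → Bool) (h : σ u = false) :
    wW β γ E lam (flipE u σ) = lam u * wW β γ E lam σ := by
  unfold wW
  have h1 : (E.map fun e => edgeW β γ (flipE u σ e.1) (flipE u σ e.2))
      = E.map fun e => edgeW β γ (σ e.1) (σ e.2) := by
    refine Multiset.map_congr rfl fun e he => ?_
    have h1 : e.1 ≠ u := fun h => hu ⟨e, he, Or.inl h⟩
    have h2 : e.2 ≠ u := fun h => hu ⟨e, he, Or.inr h⟩
    simp [flipE, h1, h2]
  rw [h1, ← Finset.mul_prod_erase _ _ (Finset.mem_univ u),
    ← Finset.mul_prod_erase (f := fun v => if σ v then lam v else 1) _ (Finset.mem_univ u)]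
  have h2 : ∏ x ∈ Finset.univ.erase u, (if flipE u σ x then lam x else 1)
      = ∏ x ∈ Finset.univ.erase u, (if σ x then lam x else 1) := by
    refine Finset.prod_congr rfl fun w hw => ?_
    simp [flipE, Finset.ne_of_mem_erase hw]
  rw [h2]
  simp [flipE, h]
  ring

lemma z1_iso (β γ : ℝ) (E : Multiset (V × V)) (lam : V → ℂ) (u : V) (hu : ¬ inc E u) :
    z1 β γ E lam u true = lam u * z1 β γ E lam u false := by
  unfold z1
  rw [← Equiv.sum_comp (flipE u), Finset.mul_sum]
  refine Finset.sum_congr rfl fun σ _ => ?_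
  cases h : σ u
  · rw [wW_flip β γ E lam u hu σ h]
    simp [flipE, h]
  · simp [flipE, h]

lemma z2_iso (β γ : ℝ) (E : Multiset (V × V)) (lam : V → ℂ) (u v : V) (huv : u ≠ v)
    (hu : ¬ inc E u) (j : Bool) :
    z2 β γ E lam u v true j = lam u * z2 β γ E lam u v false j := by
  unfold z2
  rw [← Equiv.sum_comp (flipE u), Finset.mul_sum]
  refine Finset.sum_congr rfl fun σ _ => ?_
  cases h : σ u
  · rw [wW_flip β γ E lam u hu σ h]
    simp [flipE, h, huv.symm]
  · simp [flipE, h]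

/-- add the spin of `u` to the spin at `v` -/
def xorE (u v : V) (huv : u ≠ v) : (V → Bool) ≃ (V → Bool) where
  toFun σ := Function.update σ v (xor (σ v) (σ u))
  invFun σ := Function.update σ v (xor (σ v) (σ u))
  left_inv σ := by simp [huv]
  right_inv σ := by simp [huv]

/-- contraction map -/
def ctr (u v : V) (w : V) : V := if w = v then u else w

lemma z2_ctr (β γ : ℝ) (E : Multiset (V × V)) (lam : V → ℂ) (u v : V) (huv : u ≠ v) (i : Bool) :
    z2 β γ E lam u v i i = z1 β γ (E.map fun e => (ctr u v e.1, ctr u v e.2))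
      (Function.update (Function.update lam u (lam u * lam v)) v 0) u i := by
  unfold z1 z2
  rw [← Equiv.sum_comp (xorE u v huv)]
  refine Finset.sum_congr rfl fun σ _ => ?_
  rw [wW_update_zero]
  by_cases h : σ u = i
  · by_cases h2 : σ v = false
    · rw [if_pos (by simp [xorE, huv, h, h2]), if_pos h, if_pos h2]
      unfold wW
      rw [Multiset.map_map]
      congr 1
      · congr 1
        refine Multiset.map_congr rfl fun e _ => ?_
        have : ∀ w, (xorE u v huv) σ w = σ (ctr u v w) := by
          intro w
          by_cases hw : w = v
          · simp [hw, xorE, ctr, h2]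
          · simp [hw, xorE, ctr]
        simp [this]
      · have hvu : v ∈ Finset.univ.erase u := by simp [huv.symm]
        rw [← Finset.mul_prod_erase _ _ (Finset.mem_univ u),
          ← Finset.mul_prod_erase _ _ hvu,
          ← Finset.mul_prod_erase (f := fun w => if σ w then Function.update lam u (lam u * lam v) w else 1)
             _ (Finset.mem_univ u),
          ← Finset.mul_prod_erase (f := fun w => if σ w then Function.update lam u (lam u * lam v) w else 1)
             _ hvu]
        have h3 : ∏ x ∈ (Finset.univ.erase u).erase v, (if xorE u v huv σ x then lam x else 1)
          = ∏ x ∈ (Finset.univ.erase u).erase v,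
            (if σ x then Function.update lam u (lam u * lam v) x else 1) := by
          refine Finset.prod_congr rfl fun w hw => ?_
          have hw1 : w ≠ v := Finset.ne_of_mem_erase hw
          have hw2 : w ≠ u := Finset.ne_of_mem_erase (Finset.mem_of_mem_erase hw)
          simp [xorE, hw1, hw2]
        rw [h3]
        cases i <;> simp [xorE, huv, h, h2]
        ring
    · rw [if_pos h, if_neg h2, if_neg]
      simp at h2
      simp [xorE, huv, h, h2]
  · rw [if_neg h, if_neg]
    simp [xorE, huv, h]

lemma wW_cons (β γ : ℝ) (E : Multiset (V × V)) (lam : V → ℂ) (e : V × V) (σ : V → Bool) :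
    wW β γ (e ::ₘ E) lam σ = edgeW β γ (σ e.1) (σ e.2) * wW β γ E lam σ := by
  simp [wW, mul_assoc]

lemma z1_loop (β γ : ℝ) (E : Multiset (V × V)) (lam : V → ℂ) (v : V) (i : Bool) :
    z1 β γ ((v, v) ::ₘ E) lam v i = edgeW β γ i i * z1 β γ E lam v i := by
  unfold z1
  rw [Finset.mul_sum]
  refine Finset.sum_congr rfl fun σ _ => ?_
  rw [wW_cons]
  split_ifs with h
  · simp [h]
  · simp

lemma z1_edge (β γ : ℝ) (E : Multiset (V × V)) (lam : V → ℂ) (e : V × V) (u v : V)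
    (he : e = (u, v) ∨ e = (v, u)) (i : Bool) :
    z1 β γ (e ::ₘ E) lam v i = edgeW β γ false i * z2 β γ E lam u v false i
      + edgeW β γ true i * z2 β γ E lam u v true i := by
  have hs : ∀ a b, edgeW β γ a b = edgeW β γ b a := by
    intro a b; cases a <;> cases b <;> rfl
  unfold z1 z2
  rw [Finset.mul_sum, Finset.mul_sum, ← Finset.sum_add_distrib]
  refine Finset.sum_congr rfl fun σ _ => ?_
  rw [wW_cons]
  have : edgeW β γ (σ e.1) (σ e.2) = edgeW β γ (σ u) (σ v) := by
    rcases he with rfl | rfl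
    · rfl
    · exact hs _ _
  rw [this]
  by_cases h : σ v = i
  · cases h2 : σ u <;> simp [h]
  · simp [h]

structure Good (β γ : ℝ) (M K : Set ℂ) : Prop where
  zero_mem : (0 : ℂ) ∈ M
  mul_mem : ∀ x ∈ M, ∀ y ∈ M, x * y ∈ M
  hβ : (β : ℂ) ≠ 0
  a : ∀ x ∈ M, (γ * x) / β ∈ K
  b : ∀ z ∈ K, (γ * z) / β ∈ K
  c : ∀ x ∈ M, ∀ y ∈ M, (β + y : ℂ) ≠ 0 ∧ x * (1 + γ * y) / (β + y) ∈ K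
  d : ∀ z ∈ K, ∀ y ∈ M, z * (1 + γ * y) / (β + y) ∈ K
  e : ∀ z ∈ K, ∀ x ∈ M, (β + z : ℂ) ≠ 0 ∧ x * (1 + γ * z) / (β + z) ∈ K
  f : ∀ z ∈ K, ∀ z' ∈ K, ∀ z'' ∈ K, (z'' + γ * z') / (β + z) ∈ K
  g : ∀ z ∈ K, 1 + z ≠ 0

lemma z0_empty (β γ : ℝ) (lam : V → ℂ) :
    z0 β γ (0 : Multiset (V × V)) lam = ∏ v, (1 + lam v) := by
  have := Finset.prod_univ_sum (fun _ : V => (Finset.univ : Finset Bool))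
    (fun v b => if b then lam v else (1 : ℂ))
  simp only [Fintype.piFinset_univ] at this
  simp only [z0, wW, Multiset.map_zero, Multiset.prod_zero, one_mul]
  rw [← this]
  refine Finset.prod_congr rfl fun v _ => ?_
  simp [add_comm]

set_option maxHeartbeats 2000000 in
theorem main_ind (β γ : ℝ) (M K : Set ℂ) (hG : Good β γ M K) : ∀ (m : ℕ) (E : Multiset (V × V)),
    E.card = m → ∀ lam : V → ℂ, (∀ v, inc E v → lam v ∈ M) → (∀ v, ¬ inc E v → 1 + lam v ≠ 0) →
    z0 β γ E lam ≠ 0 ∧ ∀ v, inc E v → z1 β γ E lam v false ≠ 0 ∧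
      z1 β γ E lam v true / z1 β γ E lam v false ∈ K := by
  intro m
  induction m with
  | zero =>
    intro E hE lam h1 h2
    obtain rfl := Multiset.card_eq_zero.1 hE
    refine ⟨?_, ?_⟩
    · rw [z0_empty]
      exact Finset.prod_ne_zero_iff.2 fun v _ => h2 v (by simp [inc])
    · rintro v ⟨e, he, -⟩
      simp at he
  | succ m ih =>
    intro E hE lam h1 h2
    have key : ∀ v, inc E v → z1 β γ E lam v false ≠ 0 ∧
      z1 β γ E lam v true / z1 β γ E lam v false ∈ K := by
      rintro v ⟨e, he, hev⟩
      obtain ⟨E', rfl⟩ := Multiset.exists_cons_of_mem he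
      have hE' : E'.card = m := by simpa using hE
      have hinc : ∀ w, inc E' w → inc (e ::ₘ E') w := by
        rintro w ⟨e', he', h⟩
        exact ⟨e', Multiset.mem_cons_of_mem he', h⟩
      have hinc' : ∀ w, w ≠ e.1 → w ≠ e.2 → ¬ inc E' w → ¬ inc (e ::ₘ E') w := by
        rintro w hw1 hw2 hn ⟨e', he', h⟩
        rcases Multiset.mem_cons.1 he' with rfl | h'
        · rcases h with h | h
          · exact hw1 h.symm
          · exact hw2 h.symm
        · exact hn ⟨e', h', h⟩
      have hvM : lam v ∈ M := h1 v ⟨e, he, hev⟩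
      obtain ⟨u, hu⟩ : ∃ u, e = (u, v) ∨ e = (v, u) := by
        rcases hev with h | h
        · exact ⟨e.2, Or.inr (by rw [← h])⟩
        · exact ⟨e.1, Or.inl (by rw [← h])⟩
      have hadd : ∀ w, w ≠ u → w ≠ v → ¬ inc E' w → ¬ inc (e ::ₘ E') w := by
        intro w hw1 hw2
        apply hinc'
        · rcases hu with rfl | rfl <;> assumption
        · rcases hu with rfl | rfl <;> assumption
      by_cases huv : u = v
      · subst huv
        have hu : e = (u, u) := by rcases hu with h | h <;> exact h
        subst hu
        have hz := ih E' hE' (Function.update lam u 0) (by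
          intro w hw
          by_cases hwu : w = u
          · subst hwu; simpa using hG.zero_mem
          · rw [Function.update_of_ne hwu]; exact h1 w (hinc w hw)) (by
          intro w hw
          by_cases hwu : w = u
          · subst hwu; simp
          · rw [Function.update_of_ne hwu]; exact h2 w (hadd w hwu hwu hw))
        have hz0 := hz.1
        rw [z0_update] at hz0
        rw [z1_loop, z1_loop]
        have e1 : edgeW β γ false false = β := by simp [edgeW]
        have e2 : edgeW β γ true true = γ := by simp [edgeW]
        rw [e1, e2]
        refine ⟨mul_ne_zero hG.hβ hz0, ?_⟩
        by_cases hi : inc E' u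
        · have := (ih E' hE' lam (fun w hw => h1 w (hinc w hw)) (by
            intro w hw
            by_cases hwu : w = u
            · subst hwu; exact absurd hi hw
            · exact h2 w (hadd w hwu hwu hw))).2 u hi
          have h3 := hG.b _ this.2
          convert h3 using 1
          have := hG.hβ
          field_simp
        · rw [z1_iso _ _ _ _ _ hi]
          have h3 := hG.a _ hvM
          convert h3 using 1
          have := hG.hβ
          field_simp
      · have huM : lam u ∈ M := by
          apply h1 u ⟨e, he, ?_⟩
          rcases hu with rfl | rfl <;> simp
        have hup : ∀ (lam' : V → ℂ), (∀ w, w ≠ u → w ≠ v → lam' w = lam w) →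
            (inc E' u → lam' u ∈ M) → (inc E' v → lam' v ∈ M) → 
            (¬ inc E' u → 1 + lam' u ≠ 0) → (¬ inc E' v → 1 + lam' v ≠ 0) →
            z0 β γ E' lam' ≠ 0 ∧ ∀ v, inc E' v → z1 β γ E' lam' v false ≠ 0 ∧
              z1 β γ E' lam' v true / z1 β γ E' lam' v false ∈ K := by
          intro lam' ha hb hc hd he
          apply ih E' hE' lam'
          · intro w hw
            by_cases hwu : w = u
            · subst hwu; exact hb hw
            by_cases hwv : w = v
            · subst hwv; exact hc hw
            rw [ha w hwu hwv]; exact h1 w (hinc w hw)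
          · intro w hw
            by_cases hwu : w = u
            · subst hwu; exact hd hw
            by_cases hwv : w = v
            · subst hwv; exact he hw
            rw [ha w hwu hwv]; exact h2 w (hadd w hwu hwv hw)
        have hz00 : z2 β γ E' lam u v false false ≠ 0 := by
          have := (hup (Function.update (Function.update lam v 0) u 0)
            (by intro w hw1 hw2; simp [hw1, hw2]) (by simp [hG.zero_mem])
            (by simp [Ne.symm huv, hG.zero_mem]) (by simp) (by simp [Ne.symm huv])).1
          rwa [z0_update, z1_update] at this
        have hR : inc E' u → z2 β γ E' lam u v true false / z2 β γ E' lam u v false false ∈ K := by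
          intro hi
          have := ((hup (Function.update lam v 0)
            (by intro w hw1 hw2; simp [hw2]) (by simp [huv, huM])
            (by simp [hG.zero_mem]) (fun h => absurd hi h) (by simp)).2 u hi).2
          rwa [z1_update, z1_update] at this
        have hR2 : inc E' v → z2 β γ E' lam u v false true / z2 β γ E' lam u v false false ∈ K := by
          intro hi
          have := ((hup (Function.update lam u 0)
            (by intro w hw1 hw2; simp [hw1]) (by simp [hG.zero_mem])
            (by simp [Ne.symm huv, hvM]) (by simp) (fun h => absurd hi h)).2 v hi).2
          rwa [z1_update, z1_update, z2_symm, z2_symm _ _ _ _ v] at this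
        have hR1 : inc E' u → inc E' v →
            z2 β γ E' lam u v true true / z2 β γ E' lam u v false false ∈ K := by
          intro hiu hiv
          rw [z2_ctr _ _ _ _ _ _ huv, z2_ctr _ _ _ _ _ _ huv]
          have hcu : inc (E'.map fun e => (ctr u v e.1, ctr u v e.2)) u := by
            obtain ⟨e', he', h⟩ := hiu
            refine ⟨_, Multiset.mem_map_of_mem _ he', ?_⟩
            rcases h with h | h
            · left; simp [ctr, h]
            · right; simp [ctr, h]
          have hmm := ih (E'.map fun e => (ctr u v e.1, ctr u v e.2)) (by simpa using hE')
            (Function.update (Function.update lam u (lam u * lam v)) v 0)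
          refine ((hmm ?_ ?_).2 u hcu).2
          · rintro w hw
            by_cases hwv : w = v
            · subst hwv; simp [hG.zero_mem]
            by_cases hwu : w = u
            · subst hwu; simp [hwv, hG.mul_mem _ huM _ hvM]
            rw [Function.update_of_ne hwv, Function.update_of_ne hwu]
            apply h1 w (hinc w _)
            obtain ⟨e', he', h⟩ := hw
            obtain ⟨e'', he'', rfl⟩ := Multiset.mem_map.1 he'
            refine ⟨e'', he'', ?_⟩
            have : ∀ x, ctr u v x = w → x = w := by
              intro x hx
              unfold ctr at hx
              split_ifs at hx
              · exact absurd hx.symm hwu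
              · exact hx
            exact h.imp (this _) (this _)
          · intro w hw
            by_cases hwv : w = v
            · subst hwv; simp
            by_cases hwu : w = u
            · subst hwu; exact absurd hcu hw
            rw [Function.update_of_ne hwv, Function.update_of_ne hwu]
            apply h2 w (hadd w hwu hwv _)
            rintro ⟨e', he', h⟩
            apply hw
            refine ⟨_, Multiset.mem_map_of_mem _ he', ?_⟩
            rcases h with h | h
            · left; simp [ctr, h, hwv]
            · right; simp [ctr, h, hwv]
        rw [z1_edge β γ E' lam e u v hu, z1_edge β γ E' lam e u v hu]
        have e1 : edgeW β γ false false = β := by simp [edgeW]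
        have e2 : edgeW β γ true true = γ := by simp [edgeW]
        have e3 : edgeW β γ true false = 1 := by simp [edgeW]
        have e4 : edgeW β γ false true = 1 := by simp [edgeW]
        rw [e1, e2, e3, e4, one_mul, one_mul]
        have i1 : ¬ inc E' u → ∀ j, z2 β γ E' lam u v true j = lam u * z2 β γ E' lam u v false j :=
          fun h j => z2_iso _ _ _ _ _ _ huv h j
        have i2 : ¬ inc E' v → ∀ j, z2 β γ E' lam u v j true = lam v * z2 β γ E' lam u v j false := by
          intro h j
          rw [z2_symm, z2_iso _ _ _ _ _ _ (Ne.symm huv) h j, z2_symm]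
        generalize hA : z2 β γ E' lam u v false false = A at *
        generalize hB : z2 β γ E' lam u v true false = B at *
        generalize hC : z2 β γ E' lam u v false true = C at *
        generalize hD : z2 β γ E' lam u v true true = D at *
        have fin : ∀ R R' R'' : ℂ, B = R * A → D = R' * A → C = R'' * A → (β + R : ℂ) ≠ 0 →
            (R'' + γ * R') / (β + R) ∈ K → β * A + B ≠ 0 ∧ (C + γ * D) / (β * A + B) ∈ K := by
          rintro R R' R'' rfl rfl rfl hne hmem
          have : (β * A + R * A : ℂ) = (β + R) * A := by ring
          rw [this]
          refine ⟨mul_ne_zero hne hz00, ?_⟩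
          convert hmem using 1
          rw [show R'' * A + γ * (R' * A) = (R'' + γ * R') * A by ring, mul_div_mul_right _ _ hz00]
        have dv : ∀ X : ℂ, X = X / A * A := fun X => by field_simp
        by_cases hiu : inc E' u <;> by_cases hiv : inc E' v
        · exact fin (B / A) (D / A) (C / A) (dv _) (dv _) (dv _)
            (hG.e _ (hR hiu) _ hG.zero_mem).1 (hG.f _ (hR hiu) _ (hR1 hiu hiv) _ (hR2 hiv))
        · have hx := hG.e _ (hR hiu) _ hvM
          have j1 := i2 hiv false
          have j2 := i2 hiv true
          rw [hC, hA] at j1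
          rw [hD, hB] at j2
          refine fin (B / A) (lam v * (B / A)) (lam v) (dv _) ?_ j1 hx.1 ?_
          · rw [j2, mul_assoc, ← dv]
          · convert hx.2 using 2; ring
        · have hx := hG.d _ (hR2 hiv) _ huM
          have j1 := i1 hiu false
          have j2 := i1 hiu true
          rw [hB, hA] at j1
          rw [hD, hC] at j2
          refine fin (lam u) (lam u * (C / A)) (C / A) j1 ?_ (dv _) (hG.c _ huM _ huM).1 ?_
          · rw [j2, mul_assoc, ← dv]
          · convert hx using 2; ring
        · have hx := hG.c _ hvM _ huM
          have j1 := i1 hiu false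
          have j2 := i1 hiu true
          have j3 := i2 hiv false
          rw [hB, hA] at j1
          rw [hD, hC] at j2
          rw [hC, hA] at j3
          refine fin (lam u) (lam u * lam v) (lam v) j1 ?_ j3 hx.1 ?_
          · rw [j2, j3, mul_assoc]
          · convert hx.2 using 2; ring
    refine ⟨?_, key⟩
    obtain ⟨e, he⟩ := Multiset.card_pos_iff_exists_mem.1 (by omega : 0 < E.card)
    obtain ⟨k1, k2⟩ := key e.1 ⟨e, he, Or.inl rfl⟩
    have k3 := hG.g _ k2
    rw [z0_eq β γ E lam e.1]
    intro h0
    apply k3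
    field_simp
    rw [h0, mul_zero]

/-- number of half-edges -/
def hdeg (E : Multiset (V × V)) (v : V) : ℕ :=
  (E.map fun e => (if e.1 = v then 1 else 0) + (if e.2 = v then 1 else 0)).sum

lemma hdeg_pos (E : Multiset (V × V)) (v : V) (h : inc E v) : hdeg E v ≠ 0 := by
  obtain ⟨e, he, h⟩ := h
  unfold hdeg
  rw [Ne, Multiset.sum_eq_zero_iff]
  push Not
  refine ⟨_, Multiset.mem_map_of_mem _ he, ?_⟩
  rcases h with h | h <;> simp [h]

lemma hdeg_zero (E : Multiset (V × V)) (v : V) (h : ¬ inc E v) : hdeg E v = 0 := by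
  unfold hdeg
  rw [Multiset.sum_eq_zero_iff]
  intro x hx
  obtain ⟨e, he, rfl⟩ := Multiset.mem_map.1 hx
  have h1 : e.1 ≠ v := fun h' => h ⟨e, he, Or.inl h'⟩
  have h2 : e.2 ≠ v := fun h' => h ⟨e, he, Or.inr h'⟩
  simp [h1, h2]

lemma wW_scale (β γ s : ℝ) (hs : s ≠ 0) (lam : V → ℂ) (σ : V → Bool) (E : Multiset (V × V)) :
    wW β γ E lam σ = (s : ℂ) ^ E.card *
      wW (β / s) (γ * s) E (fun v => lam v * (s : ℂ)⁻¹ ^ hdeg E v) σ := by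
  have hs' : (s : ℂ) ≠ 0 := by exact_mod_cast hs
  induction E using Multiset.induction with
  | empty => simp [wW, hdeg]
  | cons e E ih =>
    rw [wW_cons, ih]
    have : ∏ v, (if σ v then lam v * (s : ℂ)⁻¹ ^ hdeg (e ::ₘ E) v else 1)
      = (∏ v, (if σ v then lam v * (s : ℂ)⁻¹ ^ hdeg E v else 1)) *
        ((if σ e.1 then (s : ℂ)⁻¹ else 1) * (if σ e.2 then (s : ℂ)⁻¹ else 1)) := by
      have hp : ∀ x : V, (if σ x then (s : ℂ)⁻¹ else 1) =
          ∏ v, (if σ v then (s : ℂ)⁻¹ ^ (if x = v then 1 else 0) else 1) := by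
        intro x
        rw [Finset.prod_eq_single x]
        · simp
        · intro b _ hb
          simp [hb.symm]
        · simp
      rw [hp, hp, ← Finset.prod_mul_distrib, ← Finset.prod_mul_distrib]
      refine Finset.prod_congr rfl fun v _ => ?_
      split_ifs <;> simp_all [hdeg, pow_add] <;> ring
    have he : edgeW β γ (σ e.1) (σ e.2) = s * edgeW (β / s) (γ * s) (σ e.1) (σ e.2) *
        ((if σ e.1 then (s : ℂ)⁻¹ else 1) * (if σ e.2 then (s : ℂ)⁻¹ else 1)) := by
      cases σ e.1 <;> cases σ e.2 <;> simp [edgeW] <;> field_simp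
    rw [he]
    simp only [wW, this, Multiset.map_cons, Multiset.prod_cons, Multiset.card_cons]
    ring

end comb

structure Par (β g α b : ℝ) : Prop where
  hg : 0 < g
  hβ : 1 < β
  hα : 0 < α
  hα1 : α < 1
  hgα : g < α * β
  hb : α ≤ b
  F1 : 1 + g * α < b * (β - α)
  F2 : g * b < α * (β - 1 - α)
  F3 : 1 ≤ g ∨ (b + α) / 2 * (1 + g) < α * (β - α)

lemma exists_b (β g α : ℝ) (hg : 0 < g) (hβ : 1 < β) (hα : 0 < α) (hα1 : α < 1) (hgα : g < α * β)
    (h1 : g < β - 1 - α) (h2 : g * (1 + g * α) < α * (β - 1 - α) * (β - α)) (h3 : 1 ≤ g) :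
    ∃ b, Par β g α b := by
  have hp : 0 < β - α := by linarith
  have hlt : max α ((1 + g * α) / (β - α)) < α * (β - 1 - α) / g := by
    apply max_lt
    · rw [lt_div_iff₀ hg]; nlinarith
    · rw [div_lt_div_iff₀ hp hg]; nlinarith
  obtain ⟨b, hb1, hb2⟩ := exists_between hlt
  obtain ⟨hb3, hb4⟩ := max_lt_iff.1 hb1
  refine ⟨b, hg, hβ, hα, hα1, hgα, hb3.le, ?_, ?_, Or.inl h3⟩
  · rwa [div_lt_iff₀ hp] at hb4
  · rw [lt_div_iff₀ hg] at hb2; linarith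

lemma exists_b' (β g : ℝ) (hg : 0 < g) (hβ : 1 < β) (hg2 : g ≤ 3 / 2)
    (h1 : g < β - 1.86) : ∃ α b, Par β g α b := by
  by_cases h3 : 1 ≤ g
  · refine ⟨1 / 2, exists_b β g (1 / 2) hg hβ (by norm_num) (by norm_num) (by linarith)
      (by linarith) ?_ h3⟩
    nlinarith
  · push Not at h3
    have hp : 0 < β - 1 / 2 := by linarith
    have h1g : 0 < 1 + g := by linarith
    have hlt : max (1 / 2) ((1 + g * (1 / 2)) / (β - 1 / 2)) < (β - 1 / 2) / (1 + g) - 1 / 2 := by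
      apply max_lt
      · rw [lt_sub_iff_add_lt, lt_div_iff₀ h1g]; nlinarith
      · rw [lt_sub_iff_add_lt, lt_div_iff₀ h1g, div_add' _ _ _ hp.ne', div_mul_eq_mul_div,
          div_lt_iff₀ hp]
        nlinarith [mul_pos hg (sub_pos.2 h1), mul_pos (sub_pos.2 h1) (sub_pos.2 h1)]
    obtain ⟨b, hb1, hb2⟩ := exists_between hlt
    obtain ⟨hb3, hb4⟩ := max_lt_iff.1 hb1
    rw [div_lt_iff₀ hp] at hb4
    rw [lt_sub_iff_add_lt, lt_div_iff₀ h1g] at hb2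
    refine ⟨1 / 2, b, hg, hβ, by norm_num, by norm_num, by linarith, hb3.le, by linarith, ?_,
      Or.inr (by linarith)⟩
    nlinarith [mul_pos (sub_pos.2 hb3) (sub_pos.2 h3)]

lemma exists_b'' (β g : ℝ) (hg : 3 / 2 < g) (hβ : 2 < β)
    (h1 : g * (β ^ 2 - 1) < β ^ 2 * (β - 2)) : ∃ α b, Par β g α b := by
  have hb0 : 0 < β := by linarith
  have hg0 : 0 < g := by linarith
  have hgb : g < β - 1 - g / β := by
    have : g * (β + 1) < β * (β - 1) := by
      have h0 : (g * (β + 1)) * (β - 1) < (β * (β - 1)) * (β - 1) := by nlinarith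
      exact lt_of_mul_lt_mul_right h0 (by linarith)
    have h2 : g + g / β < β - 1 := by
      rw [add_div' _ _ _ hb0.ne', div_lt_iff₀ hb0]; linarith
    linarith
  have hg1 : g / β < 1 := by
    rw [div_lt_one hb0]
    have : 0 < g / β := by positivity
    linarith
  have hphi : g * (1 + g * (g / β)) < (g / β) * (β - 1 - (g / β)) * (β - (g / β)) := by
    have e1 : (g / β) * (β - 1 - (g / β)) * (β - (g / β)) - g * (1 + g * (g / β))
      = g / β ^ 3 * (β ^ 4 - 2 * β ^ 3 - 2 * g * β ^ 2 + g * β + g ^ 2 - β ^ 2 * g ^ 2) := by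
      field_simp
      ring
    have e2 : 0 < β ^ 4 - 2 * β ^ 3 - 2 * g * β ^ 2 + g * β + g ^ 2 - β ^ 2 * g ^ 2 := by
      nlinarith [mul_pos hg0 (sub_pos.2 h1), mul_pos hb0 (sub_pos.2 h1)]
    have : 0 < g / β ^ 3 * (β ^ 4 - 2 * β ^ 3 - 2 * g * β ^ 2 + g * β + g ^ 2 - β ^ 2 * g ^ 2) := by
      positivity
    linarith
  have c1 : ∀ᶠ α in nhdsWithin (g / β) (Set.Ioi (g / β)), g < β - 1 - α := by
    apply Filter.Eventually.filter_mono nhdsWithin_le_nhds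
    exact (isOpen_lt continuous_const (by fun_prop : Continuous fun α : ℝ => β - 1 - α)).mem_nhds hgb
  have c2 : ∀ᶠ α in nhdsWithin (g / β) (Set.Ioi (g / β)), α < 1 := by
    apply Filter.Eventually.filter_mono nhdsWithin_le_nhds
    exact (isOpen_lt continuous_id continuous_const).mem_nhds hg1
  have c3 : ∀ᶠ α in nhdsWithin (g / β) (Set.Ioi (g / β)),
      g * (1 + g * α) < α * (β - 1 - α) * (β - α) := by
    apply Filter.Eventually.filter_mono nhdsWithin_le_nhds
    exact (isOpen_lt (by fun_prop : Continuous fun α : ℝ => g * (1 + g * α))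
      (by fun_prop : Continuous fun α : ℝ => α * (β - 1 - α) * (β - α))).mem_nhds hphi
  obtain ⟨α, ⟨⟨k1, k2⟩, k3⟩, k4⟩ := (((c1.and c2).and c3).and self_mem_nhdsWithin).exists
  have k4 : g / β < α := k4
  refine ⟨α, exists_b β g α hg0 (by linarith) (lt_trans (by positivity) k4) k2 ?_ k1 k3
    (by linarith)⟩
  rwa [div_lt_iff₀ hb0] at k4

lemma exists_par (β γ : ℝ) (hβ : 1 < β) (hγ : γ < 0) (h : β + γ > 2 - gFun β) :
    ∃ α b, Par β (-γ) α b := by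
  have d1 : 0 < β ^ 2 - 1 := by nlinarith
  have d2 : 0 < β ^ 3 + β ^ 2 - β := by nlinarith [mul_pos (by linarith : 0 < β) d1]
  have g1 : (β - 2) / (β ^ 2 - 1) < 0.14 := by
    rw [div_lt_iff₀ d1]; nlinarith [sq_nonneg (β - 3.5)]
  have g2 : (β - 1) ^ 2 / (β ^ 3 + β ^ 2 - β) < 0.14 := by
    rw [div_lt_iff₀ d2]
    nlinarith [mul_nonneg (by linarith : 0 ≤ β - 1) (sq_nonneg (β - 2.6)),
      mul_nonneg (by linarith : 0 ≤ β - 1) (sq_nonneg (β - 2.5))]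
  have g3 : gFun β < 0.14 := max_lt g1 g2
  by_cases hg : -γ ≤ 3 / 2
  · exact exists_b' β (-γ) (by linarith) hβ hg (by linarith)
  · push Not at hg
    have hβ3 : 3 < β := by linarith
    have g4 : gFun β = (β - 2) / (β ^ 2 - 1) := by
      apply max_eq_left
      rw [div_le_div_iff₀ d2 d1]
      nlinarith [mul_pos (sub_pos.2 hβ3) (sub_pos.2 hβ3), sq_nonneg β, mul_nonneg (sq_nonneg β) (sub_pos.2 hβ3).le]
    rw [g4] at h
    refine exists_b'' β (-γ) hg (by linarith) ?_
    have : -γ < β - 2 + (β - 2) / (β ^ 2 - 1) := by linarith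
    rw [add_div' _ _ _ d1.ne', lt_div_iff₀ d1] at this
    nlinarith

section strict
variable {β g α b : ℝ} (hP : Par β g α b)

lemma norm_lt_aux (w n d : ℂ) (c r : ℝ) (hn : n = w * d) (hd : d ≠ 0) (hw : ‖w - c‖ < r) :
    ‖n - c * d‖ < r * ‖d‖ := by
  rw [hn, ← sub_mul, norm_mul]
  exact mul_lt_mul_of_pos_right hw (norm_pos_iff.2 hd)

lemma real_ball (α b x : ℝ) (h1 : -α < x) (h2 : x < b) :
    ‖(x : ℂ) - ((b - α) / 2 : ℝ)‖ < (b + α) / 2 := by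
  rw [← Complex.ofReal_sub, Complex.norm_real, Real.norm_eq_abs, abs_lt]
  constructor <;> linarith

lemma scaleC (α b t : ℝ) (hα : 0 < α) (hb : α ≤ b) (z : ℂ)
    (hz : ‖z - ((b - α) / 2 : ℝ)‖ ≤ (b + α) / 2) (ht : t < 1) (ht2 : -t * b < α) :
    ‖(t : ℂ) * z - ((b - α) / 2 : ℝ)‖ < (b + α) / 2 := by
  have e : (t : ℂ) * z - ((b - α) / 2 : ℝ)
    = t * (z - ((b - α) / 2 : ℝ)) + ((t - 1) * ((b - α) / 2) : ℝ) := by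
    push_cast; ring
  rw [e]
  refine (norm_add_le _ _).trans_lt ?_
  rw [norm_mul, Complex.norm_real, Complex.norm_real, Real.norm_eq_abs, Real.norm_eq_abs, abs_mul,
    abs_of_neg (by linarith : t - 1 < 0), abs_of_nonneg (by linarith : 0 ≤ (b - α) / 2)]
  have h1 := mul_le_mul_of_nonneg_left hz (abs_nonneg t)
  rcases le_or_gt 0 t with h | h
  · rw [abs_of_nonneg h] at *
    nlinarith
  · rw [abs_of_neg h] at *
    nlinarith

lemma scaleO (α b t : ℝ) (hα : 0 < α) (hb : α ≤ b) (z : ℂ)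
    (hz : ‖z - ((b - α) / 2 : ℝ)‖ < (b + α) / 2) (ht : t ≤ 1) (ht2 : -t * b < α) :
    ‖(t : ℂ) * z - ((b - α) / 2 : ℝ)‖ < (b + α) / 2 := by
  rcases ht.lt_or_eq with h | rfl
  · exact scaleC α b t hα hb z hz.le h ht2
  · simpa using hz

lemma disk_aux (P p p' g α b X N : ℝ) (hP : 0 < P) (hg : 0 < g) (hα : 0 < α) (hb : 0 < b)
    (hp : 0 < p) (hpp : p < p')
    (h1 : X ^ 2 ≤ N) (h2 : N ≤ (p + p') * X - p * p') (A1 : P < (g + b) * p)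
    (A2 : (g - α) * p' < P) :
    P ^ 2 - P * (2 * g + b - α) * X + (g - α) * (g + b) * N < 0 := by
  have hX : (X - p) * (X - p') ≤ 0 := by nlinarith
  have hX1 : p ≤ X := by
    by_contra hh; push Not at hh
    nlinarith [mul_pos (sub_pos.2 hh) (sub_pos.2 (hh.trans hpp))]
  have hX2 : X ≤ p' := by
    by_contra hh; push Not at hh
    nlinarith [mul_pos (sub_pos.2 hh) (sub_pos.2 (hpp.trans hh))]
  have hgb : 0 < g + b := by linarith
  rcases le_or_gt α g with h | h
  · have hc : 0 ≤ (g - α) * (g + b) := mul_nonneg (by linarith) hgb.le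
    have h3 := mul_le_mul_of_nonneg_left h2 hc
    have Ep : (P - (g - α) * p) * (P - (g + b) * p) < 0 := by
      apply mul_neg_of_pos_of_neg
      · nlinarith
      · linarith
    have Ep' : (P - (g - α) * p') * (P - (g + b) * p') < 0 := by
      apply mul_neg_of_pos_of_neg
      · linarith
      · nlinarith
    have hpos : 0 < p' - p := by linarith
    have key : (P ^ 2 - P * (2 * g + b - α) * X + (g - α) * (g + b) * ((p + p') * X - p * p'))
        * (p' - p) < 0 := by
      have : (P ^ 2 - P * (2 * g + b - α) * X + (g - α) * (g + b) * ((p + p') * X - p * p'))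
        * (p' - p) = (P - (g - α) * p) * (P - (g + b) * p) * (p' - X)
          + (P - (g - α) * p') * (P - (g + b) * p') * (X - p) := by ring
      rw [this]
      rcases hX1.lt_or_eq with hh | hh
      · nlinarith [mul_nonneg (neg_pos.2 Ep).le (sub_nonneg.2 hX2), mul_pos (neg_pos.2 Ep') (sub_pos.2 hh)]
      · subst hh
        nlinarith [mul_pos (neg_pos.2 Ep) hpos]
    have := neg_of_mul_neg_left key hpos.le
    linarith
  · have hc : (g - α) * (g + b) ≤ 0 := mul_nonpos_of_nonpos_of_nonneg (by linarith) hgb.le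
    have h3 := mul_le_mul_of_nonpos_left h1 hc
    have : (P - (g - α) * X) * (P - (g + b) * X) < 0 := by
      apply mul_neg_of_pos_of_neg
      · nlinarith
      · nlinarith
    nlinarith

include hP

lemma Par.gb : g < β - 1 - α := by
  have := hP.F2; have := hP.hb; have := hP.hα; have := hP.hg
  have h : g * α < (β - 1 - α) * α := by nlinarith
  exact lt_of_mul_lt_mul_right h hP.hα.le

lemma Par.re_pos (z : ℂ) (hz : ‖z - ((b - α) / 2 : ℝ)‖ ≤ (b + α) / 2) :
    β - α ≤ ‖(β : ℂ) + z‖ := by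
  have h1 := (Complex.abs_re_le_norm (z - ((b - α) / 2 : ℝ))).trans hz
  have h2 := Complex.re_le_norm ((β : ℂ) + z)
  simp only [Complex.sub_re, Complex.add_re, Complex.ofReal_re] at h1 h2
  have := (abs_le.1 h1).1
  linarith

lemma Par.e0 (z : ℂ) (hz : ‖z - ((b - α) / 2 : ℝ)‖ ≤ (b + α) / 2) :
    (β : ℂ) + z ≠ 0 := by
  have := hP.re_pos z hz
  have := hP.gb
  have := hP.hg
  apply norm_pos_iff.1
  linarith

lemma Par.e1 (z : ℂ) (hz : ‖z - ((b - α) / 2 : ℝ)‖ ≤ (b + α) / 2) :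
    ‖(1 - g * z) - ((b - α) / 2 : ℝ) * (β + z)‖ < (b + α) / 2 * ‖β + z‖ := by
  obtain ⟨x, y⟩ := z
  have hgb := hP.gb
  obtain ⟨hg, hβ, hα, hα1, hgα, hb, F1, F2, F3⟩ := hP
  have hr : 0 < (b + α) / 2 := by linarith
  have hb0 : 0 < b := by linarith
  have hz2 : (x - (b - α) / 2) ^ 2 + y ^ 2 ≤ ((b + α) / 2) ^ 2 := by
    have := pow_le_pow_left₀ (norm_nonneg _) hz 2
    rw [← Complex.normSq_eq_norm_sq, Complex.normSq_apply] at this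
    simp at this
    linarith
  have key := disk_aux (1 + g * β) (β - α) (β + b) g α b (β + x) ((β + x) ^ 2 + y ^ 2)
    (by nlinarith) hg hα hb0 (by linarith) (by linarith) (by nlinarith [sq_nonneg y])
    (by nlinarith) (by nlinarith) (by nlinarith [mul_pos hα hb0])
  apply lt_of_pow_lt_pow_left₀ 2 (by positivity)
  rw [mul_pow, ← Complex.normSq_eq_norm_sq, ← Complex.normSq_eq_norm_sq, Complex.normSq_apply,
    Complex.normSq_apply]
  simp
  nlinarith

lemma Par.sf (z z' z'' : ℂ) (hz : ‖z - ((b - α) / 2 : ℝ)‖ ≤ (b + α) / 2)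
    (hz' : ‖z' - ((b - α) / 2 : ℝ)‖ ≤ (b + α) / 2)
    (hz'' : ‖z'' - ((b - α) / 2 : ℝ)‖ ≤ (b + α) / 2) :
    ‖(z'' + (-g : ℝ) * z') - ((b - α) / 2 : ℝ) * (β + z)‖ < (b + α) / 2 * ‖β + z‖ := by
  have hx := hP.re_pos z hz
  have hgb := hP.gb
  obtain ⟨hg, hβ, hα, hα1, hgα, hb, F1, F2, F3⟩ := hP
  have e : (z'' + (-g : ℝ) * z') - ((b - α) / 2 : ℝ) * (β + z)
    = (z'' - ((b - α) / 2 : ℝ)) + (-g : ℝ) * (z' - ((b - α) / 2 : ℝ))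
      + (-((b - α) / 2) : ℝ) * ((β + z) - (1 - g : ℝ)) := by
    push_cast; ring
  have hc : 0 ≤ (b - α) / 2 := by linarith
  have n1 : ‖(z'' + (-g : ℝ) * z') - ((b - α) / 2 : ℝ) * (β + z)‖ ≤
      (b + α) / 2 + g * ((b + α) / 2) + (b - α) / 2 * ‖(β + z) - (1 - g : ℝ)‖ := by
    rw [e]
    refine (norm_add_le _ _).trans (add_le_add ((norm_add_le _ _).trans (add_le_add hz'' ?_)) ?_)
    · rw [norm_mul, Complex.norm_real, Real.norm_eq_abs, abs_neg, abs_of_pos hg]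
      exact mul_le_mul_of_nonneg_left hz' hg.le
    · rw [norm_mul, Complex.norm_real, Real.norm_eq_abs, abs_neg, abs_of_nonneg hc]
  refine n1.trans_lt ?_
  by_cases h1 : 1 ≤ g
  · have : ‖((β : ℂ) + z) - (1 - g : ℝ)‖ ≤ ‖(β : ℂ) + z‖ + (g - 1) := by
      refine (norm_sub_le _ _).trans ?_
      rw [Complex.norm_real, Real.norm_eq_abs, abs_of_nonpos (by linarith)]
      linarith
    have h2 := mul_le_mul_of_nonneg_left this hc
    nlinarith [mul_le_mul_of_nonneg_left hx hα.le]
  · have h3 := F3.resolve_left h1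
    push Not at h1
    have : ‖((β : ℂ) + z) - (1 - g : ℝ)‖ ≤ ‖(β : ℂ) + z‖ := by
      obtain ⟨x, y⟩ := z
      have h1' := (Complex.abs_re_le_norm _).trans hz
      simp at h1'
      have := (abs_le.1 h1').1
      rw [← pow_le_pow_iff_left₀ (norm_nonneg _) (norm_nonneg _) two_ne_zero]
      rw [← Complex.normSq_eq_norm_sq, ← Complex.normSq_eq_norm_sq, Complex.normSq_apply,
        Complex.normSq_apply]
      simp
      nlinarith
    have h2 := mul_le_mul_of_nonneg_left this hc
    nlinarith [mul_le_mul_of_nonneg_left hx hα.le]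

lemma Par.gβ1 : g / β < 1 ∧ g / β < α ∧ 0 < g / β := by
  have := hP.hβ
  have := hP.hg
  have h0 : 0 < β := by linarith
  refine ⟨?_, ?_, by positivity⟩
  · rw [div_lt_one h0]; linarith [hP.gb, hP.hα]
  · rw [div_lt_iff₀ h0]; exact hP.hgα

lemma Par.t (y : ℝ) (hy : -(g / β) ≤ y) (hy1 : y ≤ 1) : 0 < β + y ∧
    (1 - g * y) / (β + y) < 1 ∧ (1 - g * y) / (β + y) < b ∧ -((1 - g * y) / (β + y)) * b < α
    ∧ -α < (1 - g * y) / (β + y) := by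
  have hgb := hP.gb
  obtain ⟨k1, k2, k3⟩ := hP.gβ1
  obtain ⟨hg, hβ, hα, hα1, hgα, hb, F1, F2, F3⟩ := hP
  have hb0 : 0 < b := by linarith
  have hy0 : -α < y := by linarith
  have hd : 0 < β + y := by linarith
  refine ⟨hd, ?_, ?_, ?_, ?_⟩
  · rw [div_lt_one hd]; nlinarith
  · rw [div_lt_iff₀ hd]; nlinarith
  · rw [← neg_div, div_mul_eq_mul_div, div_lt_iff₀ hd]; 
    rcases le_or_gt y 0 with h | h
    · nlinarith [mul_pos hg hb0, mul_nonneg hg.le (neg_nonneg.2 h), mul_nonneg hb0.le (mul_nonneg hg.le (neg_nonneg.2 h)), mul_pos hα hd]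
    · nlinarith [mul_nonneg (mul_pos hg hb0).le (sub_nonneg.2 hy1), mul_pos hα h, mul_pos hα hα]
  · rw [lt_div_iff₀ hd]; nlinarith

lemma Par.sa (x : ℝ) (hx : -(g / β) ≤ x) (hx1 : x ≤ 1) :
    ‖((-g : ℝ) * (x : ℂ)) - ((b - α) / 2 : ℝ) * β‖ < (b + α) / 2 * ‖(β : ℂ)‖ := by
  obtain ⟨k1, k2, k3⟩ := hP.gβ1
  have h0 : β ≠ 0 := by linarith [hP.hβ]
  refine norm_lt_aux ((-(g / β) * x : ℝ) : ℂ) _ _ _ _ ?_ (by exact_mod_cast h0) ?_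
  · push_cast
    have : (β : ℂ) ≠ 0 := by exact_mod_cast h0
    field_simp
  · apply real_ball
    · nlinarith
    · have := hP.hb
      nlinarith

lemma Par.sb (z : ℂ) (hz : ‖z - ((b - α) / 2 : ℝ)‖ ≤ (b + α) / 2) :
    ‖((-g : ℝ) * z) - ((b - α) / 2 : ℝ) * β‖ < (b + α) / 2 * ‖(β : ℂ)‖ := by
  obtain ⟨k1, k2, k3⟩ := hP.gβ1
  have h0 : β ≠ 0 := by linarith [hP.hβ]
  have h0' : 0 < β := by linarith [hP.hβ]
  refine norm_lt_aux (((-(g / β) : ℝ) : ℂ) * z) _ _ _ _ ?_ (by exact_mod_cast h0) ?_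
  · push_cast
    have : (β : ℂ) ≠ 0 := by exact_mod_cast h0
    field_simp
  · apply scaleC α b _ hP.hα hP.hb z hz (by linarith)
    rw [neg_neg, div_mul_eq_mul_div, div_lt_iff₀ h0']
    nlinarith [hP.F2, hP.hα]

lemma Par.sc (x y : ℝ) (hx : -(g / β) ≤ x) (hx1 : x ≤ 1) (hy : -(g / β) ≤ y) (hy1 : y ≤ 1) :
    ‖(x * (1 + (-g : ℝ) * y : ℂ)) - ((b - α) / 2 : ℝ) * (β + y)‖ < (b + α) / 2 * ‖(β + y : ℂ)‖ := by
  obtain ⟨k1, k2, k3⟩ := hP.gβ1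
  obtain ⟨hd, t1, t2, t3, t4⟩ := hP.t y hy hy1
  have h0 : (β + y : ℂ) ≠ 0 := by exact_mod_cast hd.ne'
  refine norm_lt_aux ((x * ((1 - g * y) / (β + y)) : ℝ) : ℂ) _ _ _ _ ?_ h0 ?_
  · push_cast
    field_simp
    ring
  · generalize (1 - g * y) / (β + y) = t at *
    have := hP.hb
    have := hP.hα
    apply real_ball
    · rcases le_or_gt 0 x with h | h
      · rcases le_or_gt 0 t with h' | h'
        · nlinarith [mul_nonneg h h']
        · nlinarith
      · rcases le_or_gt 0 t with h' | h'
        · nlinarith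
        · nlinarith
    · rcases le_or_gt 0 x with h | h
      · nlinarith
      · rcases le_or_gt 0 t with h' | h'
        · nlinarith
        · nlinarith

lemma Par.sd (z : ℂ) (y : ℝ) (hz : ‖z - ((b - α) / 2 : ℝ)‖ ≤ (b + α) / 2)
    (hy : -(g / β) ≤ y) (hy1 : y ≤ 1) :
    ‖(z * (1 + (-g : ℝ) * y : ℂ)) - ((b - α) / 2 : ℝ) * (β + y)‖ < (b + α) / 2 * ‖(β + y : ℂ)‖ := by
  obtain ⟨hd, t1, t2, t3, t4⟩ := hP.t y hy hy1
  have h0 : (β + y : ℂ) ≠ 0 := by exact_mod_cast hd.ne'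
  refine norm_lt_aux ((((1 - g * y) / (β + y) : ℝ) : ℂ) * z) _ _ _ _ ?_ h0 ?_
  · push_cast
    field_simp
    ring
  · exact scaleC α b _ hP.hα hP.hb z hz t1 t3

lemma Par.se (z : ℂ) (x : ℝ) (hz : ‖z - ((b - α) / 2 : ℝ)‖ ≤ (b + α) / 2)
    (hx : -(g / β) ≤ x) (hx1 : x ≤ 1) :
    ‖(x * (1 + (-g : ℝ) * z : ℂ)) - ((b - α) / 2 : ℝ) * (β + z)‖ < (b + α) / 2 * ‖(β + z : ℂ)‖ := by
  have h0 := hP.e0 z hz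
  have h1 := hP.e1 z hz
  have hp : 0 < ‖(β : ℂ) + z‖ := norm_pos_iff.2 h0
  refine norm_lt_aux ((x : ℂ) * ((1 - g * z) / (β + z))) _ _ _ _ ?_ h0 ?_
  · push_cast
    field_simp
    ring
  · apply scaleO α b _ hP.hα hP.hb
    · have : (1 - g * z) / (β + z) - ((b - α) / 2 : ℝ)
        = ((1 - g * z) - ((b - α) / 2 : ℝ) * (β + z)) / (β + z) := by
        field_simp
      rw [this, norm_div, div_lt_iff₀ hp]
      exact h1
    · exact hx1
    · obtain ⟨k1, k2, k3⟩ := hP.gβ1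
      have h0' : 0 < β := by linarith [hP.hβ]
      have : g / β * b < α := by
        rw [div_mul_eq_mul_div, div_lt_iff₀ h0']
        nlinarith [hP.F2, hP.hα]
      have := hP.hb
      have := hP.hα
      nlinarith

end strict

lemma exp_near (η : ℝ) (hη : 0 ≤ η) (w : ℂ) (h0 : w.re ≤ 0) (h1 : |w.im| ≤ η * (-w.re)) :
    ‖Complex.exp w - (Real.exp w.re : ℝ)‖ ≤ η := by
  have e : Complex.exp w - (Real.exp w.re : ℝ)
    = (Real.exp w.re : ℝ) * (Complex.exp (Complex.I * w.im) - 1) := by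
    rw [mul_sub, Complex.ofReal_exp, ← Complex.exp_add, mul_one]
    congr 2
    conv_lhs => rw [← Complex.re_add_im w]
    ring
  rw [e, norm_mul, Complex.norm_real, Real.norm_eq_abs, abs_of_pos (Real.exp_pos _)]
  have h2 : ‖Complex.exp (Complex.I * w.im) - 1‖ ≤ |w.im| := by
    simpa using Real.norm_exp_I_mul_ofReal_sub_one_le (x := w.im)
  have h3 : Real.exp w.re * (-w.re) ≤ 1 := by
    have h4 := Real.add_one_le_exp (-w.re)
    have h5 : Real.exp w.re * Real.exp (-w.re) = 1 := by rw [← Real.exp_add]; simp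
    nlinarith [Real.exp_pos w.re]
  have h6 := Real.exp_pos w.re
  calc Real.exp w.re * ‖Complex.exp (Complex.I * w.im) - 1‖
      ≤ Real.exp w.re * (η * (-w.re)) := mul_le_mul_of_nonneg_left (h2.trans h1) h6.le
    _ = η * (Real.exp w.re * (-w.re)) := by ring
    _ ≤ η * 1 := mul_le_mul_of_nonneg_left h3 hη
    _ = η := mul_one η

lemma exists_monoid (τ δ s : ℝ) (hτ : 0 < τ) (hτ1 : τ < 1) (hδ : 0 < δ) (hs : 1 < s) :
    ∃ M : Set ℂ, 0 ∈ M ∧ (∀ x ∈ M, ∀ y ∈ M, x * y ∈ M) ∧ ((s : ℂ)⁻¹ ∈ M) ∧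
      (∀ x ∈ M, ∃ t : ℝ, -τ ≤ t ∧ t ≤ 1 ∧ ‖x - t‖ < δ) ∧
      (∀ t : ℝ, -τ ≤ t → t ≤ 1 → M ∈ nhds ((t : ℂ) * (s : ℂ)⁻¹)) := by
  set η := δ / 2 with hη
  have hη0 : 0 < η := by positivity
  have hlt : Real.log τ < 0 := Real.log_neg hτ hτ1
  set M : Set ℂ := {z | z = 0 ∨ (∃ w : ℂ, w.re ≤ 0 ∧ |w.im| ≤ η * (-w.re) ∧ z = Complex.exp w) ∨
    (∃ w : ℂ, w.re ≤ Real.log τ ∧ |w.im| ≤ η * (-w.re) ∧ z = -Complex.exp w)} with hM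
  have hadd : ∀ w w' : ℂ, |w.im| ≤ η * (-w.re) → |w'.im| ≤ η * (-w'.re) →
      |(w + w').im| ≤ η * (-(w + w').re) := by
    intro w w' h h'
    have := abs_add_le w.im w'.im
    simp only [Complex.add_im, Complex.add_re]
    linarith
  have hpos : ∀ x : ℝ, 0 < x → x < 1 → M ∈ nhds (x : ℂ) := by
    intro x hx0 hx1
    have hc : ContinuousAt Complex.log (x : ℂ) := continuousAt_clog (by simp [hx0])
    have hop : IsOpen {w : ℂ | |w.im| < η * (-w.re)} :=
      isOpen_lt (by fun_prop) (by fun_prop)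
    have hmem : Complex.log (x : ℂ) ∈ {w : ℂ | |w.im| < η * (-w.re)} := by
      rw [← Complex.ofReal_log hx0.le]
      simp only [Set.mem_ofPred_eq, Complex.ofReal_im, Complex.ofReal_re, abs_zero]
      have := Real.log_neg hx0 hx1
      nlinarith
    have hn : ∀ᶠ z : ℂ in nhds (x : ℂ), z ≠ 0 :=
      isOpen_ne.mem_nhds (by simpa using hx0.ne')
    filter_upwards [hc.preimage_mem_nhds (hop.mem_nhds hmem), hn] with z hz hz0
    have hz : |(Complex.log z).im| < η * (-(Complex.log z).re) := hz
    refine Or.inr (Or.inl ⟨Complex.log z, ?_, hz.le, (Complex.exp_log hz0).symm⟩)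
    have := abs_nonneg (Complex.log z).im
    by_contra hh
    push Not at hh
    nlinarith
  have hneg : ∀ x : ℝ, 0 < x → x < τ → M ∈ nhds (-(x : ℂ)) := by
    intro x hx0 hx1
    have hc : ContinuousAt (fun z : ℂ => Complex.log (-z)) (-(x : ℂ)) := by
      apply ContinuousAt.clog (by fun_prop) (by simp [hx0])
    have hop : IsOpen {w : ℂ | |w.im| < η * (-w.re) ∧ w.re < Real.log τ} :=
      IsOpen.and (isOpen_lt (by fun_prop) (by fun_prop)) (isOpen_lt (by fun_prop) (by fun_prop))
    have hmem : Complex.log (-(-(x : ℂ))) ∈ {w : ℂ | |w.im| < η * (-w.re) ∧ w.re < Real.log τ} := by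
      rw [neg_neg, ← Complex.ofReal_log hx0.le]
      simp only [Set.mem_ofPred_eq, Complex.ofReal_im, Complex.ofReal_re, abs_zero]
      have := Real.log_lt_log hx0 hx1
      constructor
      · nlinarith
      · exact this
    have hn : ∀ᶠ z : ℂ in nhds (-(x : ℂ)), z ≠ 0 :=
      isOpen_ne.mem_nhds (by simpa using hx0.ne')
    filter_upwards [hc.preimage_mem_nhds (hop.mem_nhds hmem), hn] with z hz hz0
    obtain ⟨hz1, hz2⟩ := hz
    refine Or.inr (Or.inr ⟨Complex.log (-z), hz2.le, hz1.le, ?_⟩)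
    rw [Complex.exp_log (by simpa using hz0), neg_neg]
  have hzero : M ∈ nhds (0 : ℂ) := by
    refine Filter.mem_of_superset (Metric.ball_mem_nhds (0 : ℂ) (Real.exp_pos (-(Real.pi / η)))) ?_
    intro z hz
    rw [mem_ball_zero_iff] at hz
    by_cases hz0 : z = 0
    · exact Or.inl hz0
    have hzp : 0 < ‖z‖ := norm_pos_iff.2 hz0
    have h1 : (Complex.log z).re < -(Real.pi / η) := by
      rw [Complex.log_re, Real.log_lt_iff_lt_exp hzp]; exact hz
    have h2 : |(Complex.log z).im| ≤ Real.pi := by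
      rw [Complex.log_im]; exact Complex.abs_arg_le_pi z
    have h3 : Real.pi ≤ η * (-(Complex.log z).re) := by
      have : Real.pi = η * (Real.pi / η) := by field_simp
      rw [this]
      exact mul_le_mul_of_nonneg_left (by linarith) hη0.le
    have h4 : 0 < Real.pi / η := by positivity
    exact Or.inr (Or.inl ⟨Complex.log z, by linarith, h2.trans h3, (Complex.exp_log hz0).symm⟩)
  have hs0 : 0 < s := by linarith
  refine ⟨M, Or.inl rfl, ?_, ?_, ?_, ?_⟩
  · rintro x (rfl | ⟨w, a1, a2, rfl⟩ | ⟨w, a1, a2, rfl⟩) y (rfl | ⟨w', b1, b2, rfl⟩ | ⟨w', b1, b2, rfl⟩)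
    · simp [hM]
    · simp [hM]
    · simp [hM]
    · simp [hM]
    · refine Or.inr (Or.inl ⟨w + w', ?_, hadd _ _ a2 b2, by rw [Complex.exp_add]⟩)
      simp only [Complex.add_re]; linarith
    · refine Or.inr (Or.inr ⟨w + w', ?_, hadd _ _ a2 b2, by rw [Complex.exp_add]; ring⟩)
      simp only [Complex.add_re]; linarith
    · simp [hM]
    · refine Or.inr (Or.inr ⟨w + w', ?_, hadd _ _ a2 b2, by rw [Complex.exp_add]; ring⟩)
      simp only [Complex.add_re]; linarith
    · refine Or.inr (Or.inl ⟨w + w', ?_, hadd _ _ a2 b2, by rw [Complex.exp_add]; ring⟩)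
      simp only [Complex.add_re]; linarith
  · have := mem_of_mem_nhds (hpos s⁻¹ (by positivity) (inv_lt_one_of_one_lt₀ hs))
    simpa using this
  · rintro x (rfl | ⟨w, a1, a2, rfl⟩ | ⟨w, a1, a2, rfl⟩)
    · exact ⟨0, by linarith, by norm_num, by simpa using hδ⟩
    · refine ⟨Real.exp w.re, ?_, ?_, ?_⟩
      · linarith [Real.exp_pos w.re]
      · exact Real.exp_le_one_iff.2 a1
      · exact (exp_near η hη0.le w a1 a2).trans_lt (by linarith)
    · refine ⟨-Real.exp w.re, ?_, ?_, ?_⟩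
      · have := (Real.le_log_iff_exp_le hτ).1 a1
        linarith
      · linarith [Real.exp_pos w.re]
      · have h1 := exp_near η hη0.le w (by linarith) a2
        have : -Complex.exp w - ((-Real.exp w.re : ℝ) : ℂ)
          = -(Complex.exp w - (Real.exp w.re : ℝ)) := by push_cast; ring
        rw [this, norm_neg]
        linarith
  · intro t ht ht1
    rcases lt_trichotomy t 0 with h | rfl | h
    · have := hneg (-t * s⁻¹) (by have : 0 < -t := by linarith
                                  positivity) (by
        rw [← div_eq_mul_inv, div_lt_iff₀ hs0]; nlinarith)
      convert this using 2
      push_cast; ring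
    · simpa using hzero
    · have := hpos (t * s⁻¹) (by positivity) (by
        rw [← div_eq_mul_inv, div_lt_iff₀ hs0]; nlinarith)
      simpa using this

lemma exists_delta (β g α b : ℝ) (hP : Par β g α b) : ∃ δ > 0, ∀ B Γ x y z z' z'' : ℂ,
    ‖B - β‖ < δ → ‖Γ - (-g : ℝ)‖ < δ → (∃ t : ℝ, -(g / β) ≤ t ∧ t ≤ 1 ∧ ‖x - t‖ < δ) →
    (∃ t : ℝ, -(g / β) ≤ t ∧ t ≤ 1 ∧ ‖y - t‖ < δ) →
    ‖z - ((b - α) / 2 : ℝ)‖ ≤ (b + α) / 2 → ‖z' - ((b - α) / 2 : ℝ)‖ ≤ (b + α) / 2 →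
    ‖z'' - ((b - α) / 2 : ℝ)‖ ≤ (b + α) / 2 →
    ‖Γ * x - ((b - α) / 2 : ℝ) * B‖ < (b + α) / 2 * ‖B‖ ∧
    ‖Γ * z - ((b - α) / 2 : ℝ) * B‖ < (b + α) / 2 * ‖B‖ ∧
    ‖x * (1 + Γ * y) - ((b - α) / 2 : ℝ) * (B + y)‖ < (b + α) / 2 * ‖B + y‖ ∧
    ‖z * (1 + Γ * y) - ((b - α) / 2 : ℝ) * (B + y)‖ < (b + α) / 2 * ‖B + y‖ ∧
    ‖x * (1 + Γ * z) - ((b - α) / 2 : ℝ) * (B + z)‖ < (b + α) / 2 * ‖B + z‖ ∧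
    ‖(z'' + Γ * z') - ((b - α) / 2 : ℝ) * (B + z)‖ < (b + α) / 2 * ‖B + z‖ := by
  set c : ℂ := (((b - α) / 2 : ℝ) : ℂ) with hc
  set r : ℝ := (b + α) / 2 with hr
  let O : Set (ℂ × ℂ × ℂ × ℂ × ℂ × ℂ × ℂ) := {p |
    ‖p.2.1 * p.2.2.1 - c * p.1‖ < r * ‖p.1‖ ∧
    ‖p.2.1 * p.2.2.2.2.1 - c * p.1‖ < r * ‖p.1‖ ∧
    ‖p.2.2.1 * (1 + p.2.1 * p.2.2.2.1) - c * (p.1 + p.2.2.2.1)‖ < r * ‖p.1 + p.2.2.2.1‖ ∧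
    ‖p.2.2.2.2.1 * (1 + p.2.1 * p.2.2.2.1) - c * (p.1 + p.2.2.2.1)‖ < r * ‖p.1 + p.2.2.2.1‖ ∧
    ‖p.2.2.1 * (1 + p.2.1 * p.2.2.2.2.1) - c * (p.1 + p.2.2.2.2.1)‖ < r * ‖p.1 + p.2.2.2.2.1‖ ∧
    ‖(p.2.2.2.2.2.2 + p.2.1 * p.2.2.2.2.2.1) - c * (p.1 + p.2.2.2.2.1)‖ < r * ‖p.1 + p.2.2.2.2.1‖}
  have hO : IsOpen O := by
    refine IsOpen.and (isOpen_lt ?_ ?_) (IsOpen.and (isOpen_lt ?_ ?_) (IsOpen.and (isOpen_lt ?_ ?_)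
      (IsOpen.and (isOpen_lt ?_ ?_) (IsOpen.and (isOpen_lt ?_ ?_) (isOpen_lt ?_ ?_))))) <;> fun_prop
  let I : Set ℂ := (fun t : ℝ => (t : ℂ)) '' Set.Icc (-(g / β)) 1
  have hI : IsCompact I := isCompact_Icc.image (by fun_prop)
  let K : Set ℂ := Metric.closedBall c r
  have hK : IsCompact K := isCompact_closedBall c r
  let C : Set (ℂ × ℂ × ℂ × ℂ × ℂ × ℂ × ℂ) :=
    {(β : ℂ)} ×ˢ {((-g : ℝ) : ℂ)} ×ˢ I ×ˢ I ×ˢ K ×ˢ K ×ˢ K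
  have hC : IsCompact C := isCompact_singleton.prod (isCompact_singleton.prod
    (hI.prod (hI.prod (hK.prod (hK.prod hK)))))
  have hCO : C ⊆ O := by
    rintro ⟨B, Γ, x, y, z, z', z''⟩ ⟨h1, h2, ⟨x, hx, rfl⟩, ⟨y, hy, rfl⟩, hz, hz', hz''⟩
    have h1 : B = β := h1
    have h2 : Γ = (-g : ℝ) := h2
    subst h1 h2
    have hz : ‖z - c‖ ≤ r := mem_closedBall_iff_norm.1 hz
    have hz' : ‖z' - c‖ ≤ r := mem_closedBall_iff_norm.1 hz'
    have hz'' : ‖z'' - c‖ ≤ r := mem_closedBall_iff_norm.1 hz''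
    exact ⟨hP.sa x hx.1 hx.2, hP.sb z hz, hP.sc x y hx.1 hx.2 hy.1 hy.2, hP.sd z y hz hy.1 hy.2,
      hP.se z x hz hx.1 hx.2, hP.sf z z' z'' hz hz' hz''⟩
  obtain ⟨δ, hδ, hsub⟩ := hC.exists_thickening_subset_open hO hCO
  refine ⟨δ, hδ, ?_⟩
  rintro B Γ x y z z' z'' hB hΓ ⟨t, ht1, ht2, ht⟩ ⟨t', ht1', ht2', ht'⟩ hz hz' hz''
  have hmem : ((B, Γ, x, y, z, z', z'') : ℂ × ℂ × ℂ × ℂ × ℂ × ℂ × ℂ) ∈ O := by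
    apply hsub
    rw [Metric.mem_thickening_iff]
    refine ⟨((β : ℂ), ((-g : ℝ) : ℂ), (t : ℂ), (t' : ℂ), z, z', z''), ?_, ?_⟩
    · exact ⟨rfl, rfl, ⟨t, ⟨ht1, ht2⟩, rfl⟩, ⟨t', ⟨ht1', ht2'⟩, rfl⟩,
        mem_closedBall_iff_norm.2 hz, mem_closedBall_iff_norm.2 hz', mem_closedBall_iff_norm.2 hz''⟩
    · simp only [Prod.dist_eq, dist_self, max_lt_iff]
      simp only [dist_eq_norm]
      exact ⟨hB, hΓ, ht, ht', by simpa using hδ⟩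
  exact hmem

lemma mem_of_lt (n d c : ℂ) (r : ℝ) (h : ‖n - c * d‖ < r * ‖d‖) :
    d ≠ 0 ∧ n / d ∈ Metric.closedBall c r := by
  have hd : d ≠ 0 := by
    rintro rfl
    simp at h
    linarith [norm_nonneg n]
  refine ⟨hd, ?_⟩
  have : n / d - c = (n - c * d) / d := by field_simp
  rw [mem_closedBall_iff_norm, this, norm_div, div_le_iff₀ (norm_pos_iff.2 hd)]
  exact h.le

/-- For `β > 1`, `γ < 0`, `β + γ > 2 − g(β)`, there exist an open neighborhood `U`
of the real interval `[γ/β, 1]` and a closed disk `K` in `ℂ` such that for every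
graph `G` and every external field with values in `U`:
(1) for every non-isolated vertex `v`, `[Z_{G,v}(λ)]₀ ≠ 0` and `R_{G,v}(λ) ∈ K`;
(2) the partition function `Z_G(λ)` is nonzero. -/
theorem stmt16 (β γ : ℝ) (hβ : 1 < β) (hγ : γ < 0) (h : β + γ > 2 - gFun β) :
    ∃ U : Set ℂ, IsOpen U ∧ (∀ x : ℝ, x ∈ Set.Icc (γ / β) 1 → (x : ℂ) ∈ U) ∧
      ∃ (c : ℂ) (ρ : ℝ),
        ∀ (G : MultiGraph) (lam : Fin G.n → ℂ), (∀ v, lam v ∈ U) →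
          (∀ v : Fin G.n, (∃ e ∈ G.edges, e.1 = v ∨ e.2 = v) →
            ZCv β γ G lam v false ≠ 0 ∧
            ZCv β γ G lam v true / ZCv β γ G lam v false ∈ Metric.closedBall c ρ) ∧
          ZC β γ G lam ≠ 0 := by
  obtain ⟨α, b, hP⟩ := exists_par β γ hβ hγ h
  obtain ⟨δ, hδ, hD⟩ := exists_delta β (-γ) α b hP
  obtain ⟨k1, k2, k3⟩ := hP.gβ1
  have hβ0 : β ≠ 0 := by linarith
  obtain ⟨s, hs1, hs2, hs3⟩ : ∃ s : ℝ, 1 < s ∧ |β / s - β| < δ ∧ |γ * s - γ| < δ := by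
    have c1 : ∀ᶠ s in nhdsWithin (1 : ℝ) (Set.Ioi 1), |β / s - β| < δ := by
      apply Filter.Eventually.filter_mono nhdsWithin_le_nhds
      have : ContinuousAt (fun s : ℝ => |β / s - β|) 1 := by
        have : ContinuousAt (fun s : ℝ => β / s) 1 :=
          continuousAt_const.div continuousAt_id one_ne_zero
        exact (this.sub continuousAt_const).abs
      exact this.eventually_lt continuousAt_const (by simpa using hδ)
    have c2 : ∀ᶠ s in nhdsWithin (1 : ℝ) (Set.Ioi 1), |γ * s - γ| < δ := by
      apply Filter.Eventually.filter_mono nhdsWithin_le_nhds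
      have : ContinuousAt (fun s : ℝ => |γ * s - γ|) 1 := by fun_prop
      exact this.eventually_lt continuousAt_const (by simpa using hδ)
    obtain ⟨s, ⟨h1, h2⟩, h3⟩ := ((c1.and c2).and self_mem_nhdsWithin).exists
    exact ⟨s, h3, h1, h2⟩
  have hs0 : s ≠ 0 := by linarith
  have hsC : (s : ℂ) ≠ 0 := by exact_mod_cast hs0
  obtain ⟨M, m0, mmul, ms, mnear, mnhds⟩ := exists_monoid (-γ / β) δ s k3 k1 hδ hs1
  have hB : ‖((β / s : ℝ) : ℂ) - β‖ < δ := by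
    rw [← Complex.ofReal_sub, Complex.norm_real]; exact hs2
  have hΓ : ‖((γ * s : ℝ) : ℂ) - (-(-γ) : ℝ)‖ < δ := by
    rw [neg_neg, ← Complex.ofReal_sub, Complex.norm_real]; exact hs3
  have hcK : (((b - α) / 2 : ℝ) : ℂ) ∈ Metric.closedBall (((b - α) / 2 : ℝ) : ℂ) ((b + α) / 2) := by
    apply Metric.mem_closedBall_self
    have := hP.hα
    have := hP.hb
    linarith
  have hG : Good (β / s) (γ * s) M (Metric.closedBall (((b - α) / 2 : ℝ) : ℂ) ((b + α) / 2)) := by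
    have hcK' := mem_closedBall_iff_norm.1 hcK
    have z0n := mnear 0 m0
    refine ⟨m0, mmul, ?_, ?_, ?_, ?_, ?_, ?_, ?_, ?_⟩
    · exact_mod_cast div_ne_zero hβ0 hs0
    · intro x hx
      exact (mem_of_lt _ _ _ _ (hD _ _ x 0 _ _ _ hB hΓ (mnear x hx) z0n hcK' hcK' hcK').1).2
    · intro z hz
      have hz := mem_closedBall_iff_norm.1 hz
      exact (mem_of_lt _ _ _ _ (hD _ _ 0 0 z _ _ hB hΓ z0n z0n hz hcK' hcK').2.1).2
    · intro x hx y hy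
      exact (mem_of_lt _ _ _ _ (hD _ _ x y _ _ _ hB hΓ (mnear x hx) (mnear y hy)
        hcK' hcK' hcK').2.2.1)
    · intro z hz y hy
      have hz := mem_closedBall_iff_norm.1 hz
      exact (mem_of_lt _ _ _ _ (hD _ _ 0 y z _ _ hB hΓ z0n (mnear y hy) hz hcK' hcK').2.2.2.1).2
    · intro z hz x hx
      have hz := mem_closedBall_iff_norm.1 hz
      exact (mem_of_lt _ _ _ _ (hD _ _ x 0 z _ _ hB hΓ (mnear x hx) z0n hz hcK' hcK').2.2.2.2.1)
    · intro z hz z' hz' z'' hz''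
      have hz := mem_closedBall_iff_norm.1 hz
      have hz' := mem_closedBall_iff_norm.1 hz'
      have hz'' := mem_closedBall_iff_norm.1 hz''
      exact (mem_of_lt _ _ _ _ (hD _ _ 0 0 z z' z'' hB hΓ z0n z0n hz hz' hz'').2.2.2.2.2).2
    · intro z hz h0
      have hz := mem_closedBall_iff_norm.1 hz
      have h1 := (Complex.abs_re_le_norm _).trans hz
      have h2 : z = -1 := by linear_combination h0
      rw [h2] at h1
      simp only [Complex.sub_re, Complex.neg_re, Complex.one_re, Complex.ofReal_re] at h1
      have := (abs_le.1 h1).1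
      have := hP.hα1
      linarith
  refine ⟨{z | z * (s : ℂ)⁻¹ ∈ interior M ∧ 1 + z ≠ 0}, ?_, ?_, (((b - α) / 2 : ℝ) : ℂ), (b + α) / 2, ?_⟩
  · exact IsOpen.and (isOpen_interior.preimage (f := fun z : ℂ => z * (s : ℂ)⁻¹) (by fun_prop))
      (isOpen_ne_fun (by fun_prop) (by fun_prop))
  · rintro x ⟨hx1, hx2⟩
    have hx1' : -(-γ / β) ≤ x := by rw [neg_div, neg_neg]; exact hx1
    refine ⟨mem_interior_iff_mem_nhds.2 (mnhds x hx1' hx2), ?_⟩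
    have : 1 + x ≠ 0 := by linarith
    exact_mod_cast this
  · intro G lam hlam
    have hw : ∀ σ, (G.edges.map fun e => edgeW β γ (σ e.1) (σ e.2)).prod *
        ∏ v, (if σ v then lam v else 1) = (s : ℂ) ^ G.edges.card *
        wW (β / s) (γ * s) G.edges (fun v => lam v * (s : ℂ)⁻¹ ^ hdeg G.edges v) σ :=
      fun σ => wW_scale β γ s hs0 lam σ G.edges
    have e0 : ZC β γ G lam = (s : ℂ) ^ G.edges.card *
        z0 (β / s) (γ * s) G.edges (fun v => lam v * (s : ℂ)⁻¹ ^ hdeg G.edges v) := by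
      unfold ZC z0
      rw [Finset.mul_sum]
      exact Finset.sum_congr rfl fun σ _ => hw σ
    have e1 : ∀ v i, ZCv β γ G lam v i = (s : ℂ) ^ G.edges.card *
        z1 (β / s) (γ * s) G.edges (fun v => lam v * (s : ℂ)⁻¹ ^ hdeg G.edges v) v i := by
      intro v i
      unfold ZCv z1
      rw [Finset.mul_sum]
      refine Finset.sum_congr rfl fun σ _ => ?_
      rw [hw σ, mul_ite, mul_zero]
    have hpow : (s : ℂ) ^ G.edges.card ≠ 0 := pow_ne_zero _ hsC
    obtain ⟨f1, f2⟩ := main_ind (β / s) (γ * s) M _ hG G.edges.card G.edges rfl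
      (fun v => lam v * (s : ℂ)⁻¹ ^ hdeg G.edges v) (by
        intro v hv
        obtain ⟨k, hk⟩ := Nat.exists_eq_succ_of_ne_zero (hdeg_pos _ _ hv)
        have h1 : lam v * (s : ℂ)⁻¹ ∈ M := interior_subset (hlam v).1
        have h2 : ∀ k : ℕ, lam v * (s : ℂ)⁻¹ * (s : ℂ)⁻¹ ^ k ∈ M := by
          intro k
          induction k with
          | zero => simpa using h1
          | succ k ih =>
            rw [pow_succ, ← mul_assoc]
            exact mmul _ ih _ ms
        have h3 := h2 k
        simp only [hk]
        convert h3 using 1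
        rw [pow_succ]; ring) (by
        intro v hv
        simp only [hdeg_zero _ _ hv, pow_zero, mul_one]
        exact (hlam v).2)
    refine ⟨?_, ?_⟩
    · intro v hv
      obtain ⟨q1, q2⟩ := f2 v hv
      rw [e1, e1, mul_div_mul_left _ _ hpow]
      exact ⟨mul_ne_zero hpow q1, q2⟩
    · rw [e0]
      exact mul_ne_zero hpow f1
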